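/- Let l_μ ∈ L²([t0,T],ℝⁿ) and let (μ̂, ν̂) solve the two-point boundary value problem μ̂' = Fμ̂ - GQG*ν̂ + l_μ, -ν̂' = F*ν̂ + H*R^{-1}Hμ̂, μ̂(t0) = -Π0 ν̂(t0), ν̂(T) = ΣT μ̂(T) (i.e. with l_ν ≡ 0). Then for every s ∈ [t0,T], ν̂(s) = ∫_{t0}^T Λ(s,t|T) l_μ(t) dt, where Λ(s,t|T) := Φ_{F,Π}*(T,s) ΣT^{1/2} (I + ΣT^{1/2}Π(T)ΣT^{1/2})^{-1} ΣT^{1/2} Φ_{F,Π}(T,t) + ∫_{max(s,t)}^{T} Φ_{F,Π}*(τ,s) H*(τ)R(τ)^{-1}H(τ) Φ_{F,Π}(τ,t) dτ. -/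

import Mathlib

/-!
Write `V = H*R⁻¹H`, `W = GQG*`, `A = F - ΠV`, and put `e = μ + Πν`. Because `Π` solves the forward
Riccati equation, all terms in `ν` cancel in the derivative of `e`: one finds `e' = A e + lμ`, and
the initial condition of the boundary value problem becomes `e(t0) = 0`. The second equation reads
`-ν' = A*ν + V e`, where the symmetry of `Π` is used. The system is thus triangular.

In the coordinates of the flow `X(s) = Φ(s,t0)`, `Y(t) = Φ(t0,t) = X(t)⁻¹`, set `w = Y e` and
`p = X*ν`. Then `w' = Y lμ`, `w(t0) = 0` and `p' = -(X*VX) w`. The terminal condition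
`ν(T) = ΣT μ(T)` is solved for `ν(T)` in terms of `e(T)` (`terminal_solve`); this needs `Π(T) ⪰ 0`
and gives `p(T) = K w(T)` for an explicit matrix `K`. Integration by parts (`kernel_repr`) expresses
`p(s)` as the integral of `Y lμ` against `K + ∫_{max(s,t)}^T X*VX`, and multiplication by `Y(s)*`
turns this kernel into `Λ(s,t|T)`.

Everything takes place in the Carathéodory class, so derivatives are encoded by integral
representations (`Prim`, `MPrim`, `VPrim`). The tools are the product rule for absolutely continuous
functions (`Prim.mul`), uniqueness for linear equations via Grönwall (`VPrim.eq_zero`), the adjoint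
equation `∂ₜ Φ(t0,t) = -Φ(t0,t) A(t)` (`IsTransition.mprim_snd`), and the symmetry and
semidefiniteness of `Π` (`riccati_symm`, `riccati_posSemidef`). The bound `R ⪰ r I` with `H ∈ L²`
makes `V` integrable (`hrh_matII`).
-/

open MeasureTheory Matrix Set Filter

noncomputable section

namespace SDEKernels

/-- Entrywise interval integral of a matrix-valued function. -/
def matInt {ι κ : Type*} (X : ℝ → Matrix ι κ ℝ) (a b : ℝ) : Matrix ι κ ℝ :=
  Matrix.of fun i j => ∫ τ in a..b, X τ i j

/-- Entrywise continuity of a matrix-valued function on a set. -/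
def MatContOn {ι κ : Type*} (X : ℝ → Matrix ι κ ℝ) (s : Set ℝ) : Prop :=
  ∀ i j, ContinuousOn (fun t => X t i j) s

/-- Entrywise interval integrability (matrix-valued `L¹` on `[a,b]`). -/
def MatII {ι κ : Type*} (X : ℝ → Matrix ι κ ℝ) (a b : ℝ) : Prop :=
  ∀ i j, IntervalIntegrable (fun t => X t i j) volume a b

/-- Entrywise square integrability (matrix-valued `L²` on `[a,b]`). -/
def MatL2 {ι κ : Type*} (X : ℝ → Matrix ι κ ℝ) (a b : ℝ) : Prop :=
  ∀ i j, IntervalIntegrable (fun t => X t i j) volume a b ∧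
    IntervalIntegrable (fun t => (X t i j) ^ 2) volume a b

/-- Componentwise square integrability (vector-valued `L²` on `[a,b]`). -/
def VecL2 {ι : Type*} (x : ℝ → ι → ℝ) (a b : ℝ) : Prop :=
  ∀ i, IntervalIntegrable (fun t => x t i) volume a b ∧
    IntervalIntegrable (fun t => (x t i) ^ 2) volume a b

/-- `G(τ) Q(τ) G(τ)*`. -/
def gqg {n d : ℕ} (G : ℝ → Matrix (Fin n) (Fin d) ℝ) (Q : ℝ → Matrix (Fin d) (Fin d) ℝ)
    (τ : ℝ) : Matrix (Fin n) (Fin n) ℝ := G τ * Q τ * (G τ)ᵀ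

/-- `H(τ)* R(τ)⁻¹ H(τ)`. -/
def hrh {n m : ℕ} (H : ℝ → Matrix (Fin m) (Fin n) ℝ) (R : ℝ → Matrix (Fin m) (Fin m) ℝ)
    (τ : ℝ) : Matrix (Fin n) (Fin n) ℝ := (H τ)ᵀ * (R τ)⁻¹ * H τ

/-- `Φ` is the state-transition matrix of `x' = A(s) x` on `[a,b]`, in the
Carathéodory (integral) sense: `Φ(t,t) = I` and `∂ₛ Φ(s,t) = A(s) Φ(s,t)`. -/
def IsTransition {ι : Type*} [Fintype ι] [DecidableEq ι] (a b : ℝ)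
    (A : ℝ → Matrix ι ι ℝ) (Φ : ℝ → ℝ → Matrix ι ι ℝ) : Prop :=
  ∀ t ∈ Icc a b,
    MatContOn (fun s => Φ s t) (Icc a b) ∧
    MatII (fun τ => A τ * Φ τ t) a b ∧
    ∀ s ∈ Icc a b, Φ s t = 1 + matInt (fun τ => A τ * Φ τ t) t s

/-- Carathéodory solution of the backward matrix Riccati equation
`-Σ' = ΣF + F*Σ - Σ G Q G* Σ + H* R⁻¹ H`, `Σ(b) = ST`, on `[a,b]`. -/
def SolvesBackRiccati {n m d : ℕ} (a b : ℝ) (F : ℝ → Matrix (Fin n) (Fin n) ℝ)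
    (G : ℝ → Matrix (Fin n) (Fin d) ℝ) (Q : ℝ → Matrix (Fin d) (Fin d) ℝ)
    (H : ℝ → Matrix (Fin m) (Fin n) ℝ) (R : ℝ → Matrix (Fin m) (Fin m) ℝ)
    (ST : Matrix (Fin n) (Fin n) ℝ) (S : ℝ → Matrix (Fin n) (Fin n) ℝ) : Prop :=
  MatContOn S (Icc a b) ∧
  MatII (fun τ => S τ * F τ + (F τ)ᵀ * S τ - S τ * gqg G Q τ * S τ + hrh H R τ) a b ∧
  S b = ST ∧
  ∀ t ∈ Icc a b,
    S t = ST + matInt (fun τ => S τ * F τ + (F τ)ᵀ * S τ - S τ * gqg G Q τ * S τ + hrh H R τ) t b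

/-- Carathéodory solution of the forward matrix Riccati equation
`Π' = FΠ + ΠF* - Π H* R⁻¹ H Π + G Q G*`, `Π(a) = P0`, on `[a,b]`. -/
def SolvesFwdRiccati {n m d : ℕ} (a b : ℝ) (F : ℝ → Matrix (Fin n) (Fin n) ℝ)
    (G : ℝ → Matrix (Fin n) (Fin d) ℝ) (Q : ℝ → Matrix (Fin d) (Fin d) ℝ)
    (H : ℝ → Matrix (Fin m) (Fin n) ℝ) (R : ℝ → Matrix (Fin m) (Fin m) ℝ)
    (P0 : Matrix (Fin n) (Fin n) ℝ) (P : ℝ → Matrix (Fin n) (Fin n) ℝ) : Prop :=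
  MatContOn P (Icc a b) ∧
  MatII (fun τ => F τ * P τ + P τ * (F τ)ᵀ - P τ * hrh H R τ * P τ + gqg G Q τ) a b ∧
  P a = P0 ∧
  ∀ t ∈ Icc a b,
    P t = P0 + matInt (fun τ => F τ * P τ + P τ * (F τ)ᵀ - P τ * hrh H R τ * P τ + gqg G Q τ) a t

/-- Carathéodory solution of the perturbed two-point boundary value problem
`μ' = Fμ - GQG*ν + lμ`, `-ν' = F*ν + H*R⁻¹Hμ - lν`, `μ(a) = -P0 ν(a)`, `ν(b) = ST μ(b)`. -/
def SolvesTPBVP {n m d : ℕ} (a b : ℝ) (F : ℝ → Matrix (Fin n) (Fin n) ℝ)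
    (G : ℝ → Matrix (Fin n) (Fin d) ℝ) (Q : ℝ → Matrix (Fin d) (Fin d) ℝ)
    (H : ℝ → Matrix (Fin m) (Fin n) ℝ) (R : ℝ → Matrix (Fin m) (Fin m) ℝ)
    (P0 ST : Matrix (Fin n) (Fin n) ℝ) (lμ lν : ℝ → Fin n → ℝ)
    (μ ν : ℝ → Fin n → ℝ) : Prop :=
  ContinuousOn μ (Icc a b) ∧ ContinuousOn ν (Icc a b) ∧
  IntervalIntegrable (fun τ => (F τ).mulVec (μ τ) - (gqg G Q τ).mulVec (ν τ) + lμ τ) volume a b ∧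
  IntervalIntegrable (fun τ => (F τ)ᵀ.mulVec (ν τ) + (hrh H R τ).mulVec (μ τ) - lν τ) volume a b ∧
  (∀ t ∈ Icc a b,
    μ t = μ a + ∫ τ in a..t, ((F τ).mulVec (μ τ) - (gqg G Q τ).mulVec (ν τ) + lμ τ)) ∧
  (∀ t ∈ Icc a b,
    ν t = ν b + ∫ τ in t..b, ((F τ)ᵀ.mulVec (ν τ) + (hrh H R τ).mulVec (μ τ) - lν τ)) ∧
  μ a = -(P0.mulVec (ν a)) ∧
  ν b = ST.mulVec (μ b)

/-- The trajectory kernel `K(s,t|T)`. -/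
def Kker {n d : ℕ} (t0 : ℝ) (G : ℝ → Matrix (Fin n) (Fin d) ℝ)
    (Q : ℝ → Matrix (Fin d) (Fin d) ℝ) (PhiFS : ℝ → ℝ → Matrix (Fin n) (Fin n) ℝ)
    (S : ℝ → Matrix (Fin n) (Fin n) ℝ) (P0h : Matrix (Fin n) (Fin n) ℝ)
    (s t : ℝ) : Matrix (Fin n) (Fin n) ℝ :=
  PhiFS s t0 * P0h * (1 + P0h * S t0 * P0h)⁻¹ * P0h * (PhiFS t t0)ᵀ +
    matInt (fun τ => PhiFS s τ * gqg G Q τ * (PhiFS t τ)ᵀ) t0 (min s t)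

/-- The information kernel `Λ(s,t|T)`. -/
def Lker {n m : ℕ} (T : ℝ) (H : ℝ → Matrix (Fin m) (Fin n) ℝ)
    (R : ℝ → Matrix (Fin m) (Fin m) ℝ) (PhiFP : ℝ → ℝ → Matrix (Fin n) (Fin n) ℝ)
    (P : ℝ → Matrix (Fin n) (Fin n) ℝ) (STh : Matrix (Fin n) (Fin n) ℝ)
    (s t : ℝ) : Matrix (Fin n) (Fin n) ℝ :=
  (PhiFP T s)ᵀ * STh * (1 + STh * P T * STh)⁻¹ * STh * PhiFP T t +
    matInt (fun τ => (PhiFP τ s)ᵀ * hrh H R τ * PhiFP τ t) (max s t) T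


/-- Carathéodory solution of the forward linear ODE `x' = A(τ) x` (vector-valued). -/
def SolvesLinFwd {n : ℕ} (a b : ℝ) (A : ℝ → Matrix (Fin n) (Fin n) ℝ)
    (x : ℝ → Fin n → ℝ) : Prop :=
  ContinuousOn x (Icc a b) ∧
  IntervalIntegrable (fun τ => (A τ).mulVec (x τ)) volume a b ∧
  ∀ t ∈ Icc a b, x t = x a + ∫ τ in a..t, (A τ).mulVec (x τ)

/-- Carathéodory solution of the backward linear ODE `-χ' = F(σ)* χ` on `[a,c]`
with terminal value `χ(c) = z`. -/
def SolvesChi {n : ℕ} (a c : ℝ) (F : ℝ → Matrix (Fin n) (Fin n) ℝ) (z : Fin n → ℝ)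
    (χ : ℝ → Fin n → ℝ) : Prop :=
  ContinuousOn χ (Icc a c) ∧
  IntervalIntegrable (fun σ => (F σ)ᵀ.mulVec (χ σ)) volume a c ∧
  χ c = z ∧
  ∀ τ ∈ Icc a c, χ τ = z + ∫ σ in τ..c, (F σ)ᵀ.mulVec (χ σ)

/-- Carathéodory solution of the impulse-response two-point boundary value problem at `t`:
`x' = Fx - GQG*q + GQG*χ·1_{τ<t}`, `-q' = F*q + H*R⁻¹Hx`,
`x(a) = -P0 q(a) + P0 χ(a)`, `q(b) = ST x(b)`. -/
def SolvesImpulseSystem {n m d : ℕ} (a b t : ℝ) (F : ℝ → Matrix (Fin n) (Fin n) ℝ)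
    (G : ℝ → Matrix (Fin n) (Fin d) ℝ) (Q : ℝ → Matrix (Fin d) (Fin d) ℝ)
    (H : ℝ → Matrix (Fin m) (Fin n) ℝ) (R : ℝ → Matrix (Fin m) (Fin m) ℝ)
    (P0 ST : Matrix (Fin n) (Fin n) ℝ) (χ x q : ℝ → Fin n → ℝ) : Prop :=
  ContinuousOn x (Icc a b) ∧ ContinuousOn q (Icc a b) ∧
  IntervalIntegrable (fun τ => (F τ).mulVec (x τ) - (gqg G Q τ).mulVec (q τ) +
    (if τ < t then (gqg G Q τ).mulVec (χ τ) else 0)) volume a b ∧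
  IntervalIntegrable (fun τ => (F τ)ᵀ.mulVec (q τ) + (hrh H R τ).mulVec (x τ)) volume a b ∧
  (∀ s ∈ Icc a b, x s = x a + ∫ τ in a..s, ((F τ).mulVec (x τ) - (gqg G Q τ).mulVec (q τ) +
    (if τ < t then (gqg G Q τ).mulVec (χ τ) else 0))) ∧
  (∀ s ∈ Icc a b, q s = q b + ∫ τ in s..b, ((F τ)ᵀ.mulVec (q τ) + (hrh H R τ).mulVec (x τ))) ∧
  x a = -(P0.mulVec (q a)) + P0.mulVec (χ a) ∧
  q b = ST.mulVec (x b)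

/-- Right-hand side of the adjoint equation `-λ' = F*λ + H*R⁻¹H γ`. -/
def hamRHS {n m : ℕ} (F : ℝ → Matrix (Fin n) (Fin n) ℝ)
    (H : ℝ → Matrix (Fin m) (Fin n) ℝ) (R : ℝ → Matrix (Fin m) (Fin m) ℝ)
    (gam lam : ℝ → Fin n → ℝ) (τ : ℝ) : Fin n → ℝ :=
  (F τ)ᵀ.mulVec (lam τ) + (hrh H R τ).mulVec (gam τ)

/-- Carathéodory solution `(γ, λ)` of the Hamiltonian system with a jump of size `lamb` at `s`
(and terminal condition appropriate to `ΣT = 0`):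
`γ' = Fγ - GQG*λ`, `-λ' = F*λ + H*R⁻¹Hγ` on `[t0,s)` and `(s,T]`, `γ(t0) = -Π0 λ(t0)`,
`λ(T) = 0` if `s < T` (`λ(T) = lamb` if `s = T`), and `λ(s) - λ(s⁺) = lamb` if `s < T`. -/
def SolvesHamJump {n m d : ℕ} (t0 T s : ℝ) (F : ℝ → Matrix (Fin n) (Fin n) ℝ)
    (G : ℝ → Matrix (Fin n) (Fin d) ℝ) (Q : ℝ → Matrix (Fin d) (Fin d) ℝ)
    (H : ℝ → Matrix (Fin m) (Fin n) ℝ) (R : ℝ → Matrix (Fin m) (Fin m) ℝ)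
    (P0 : Matrix (Fin n) (Fin n) ℝ) (lamb : Fin n → ℝ) (gam lam : ℝ → Fin n → ℝ) : Prop :=
  ContinuousOn gam (Icc t0 T) ∧
  IntervalIntegrable (fun τ => (F τ).mulVec (gam τ) - (gqg G Q τ).mulVec (lam τ)) volume t0 T ∧
  IntervalIntegrable (hamRHS F H R gam lam) volume t0 T ∧
  gam t0 = -(P0.mulVec (lam t0)) ∧
  (∀ t ∈ Icc t0 T,
    gam t = gam t0 + ∫ τ in t0..t, ((F τ).mulVec (gam τ) - (gqg G Q τ).mulVec (lam τ))) ∧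
  ContinuousOn lam (Icc t0 s) ∧
  (∀ t ∈ Icc t0 s, lam t = lam s + ∫ τ in t..s, hamRHS F H R gam lam τ) ∧
  (s < T →
    ContinuousOn lam (Ioc s T) ∧ lam T = 0 ∧
    (∀ t ∈ Ioc s T, lam t = ∫ τ in t..T, hamRHS F H R gam lam τ) ∧
    Tendsto lam (nhdsWithin s (Ioi s)) (nhds (lam s - lamb))) ∧
  (s = T → lam T = lamb)

/-- Carathéodory solution of the filter equation
`r' = (F - Π H* R⁻¹ H) r + Π H* R⁻¹ g`, `r(t0) = 0`. -/
def SolvesRODE {n m : ℕ} (a b : ℝ) (F : ℝ → Matrix (Fin n) (Fin n) ℝ)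
    (H : ℝ → Matrix (Fin m) (Fin n) ℝ) (R : ℝ → Matrix (Fin m) (Fin m) ℝ)
    (P : ℝ → Matrix (Fin n) (Fin n) ℝ) (g : ℝ → Fin m → ℝ) (rr : ℝ → Fin n → ℝ) : Prop :=
  ContinuousOn rr (Icc a b) ∧
  IntervalIntegrable (fun τ => (F τ - P τ * hrh H R τ).mulVec (rr τ) +
    (P τ * (H τ)ᵀ * (R τ)⁻¹).mulVec (g τ)) volume a b ∧
  rr a = 0 ∧
  ∀ t ∈ Icc a b, rr t = ∫ τ in a..t, ((F τ - P τ * hrh H R τ).mulVec (rr τ) +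
    (P τ * (H τ)ᵀ * (R τ)⁻¹).mulVec (g τ))

/-- Carathéodory solution of the controlled ODE `x' = F x + G Q^{1/2} u`, `x(t0) = Π0^{1/2} ξ`. -/
def SolvesControlODE {n d : ℕ} (a b : ℝ) (F : ℝ → Matrix (Fin n) (Fin n) ℝ)
    (G : ℝ → Matrix (Fin n) (Fin d) ℝ) (Qh : ℝ → Matrix (Fin d) (Fin d) ℝ)
    (P0h : Matrix (Fin n) (Fin n) ℝ) (ξ : Fin n → ℝ) (u : ℝ → Fin d → ℝ)
    (x : ℝ → Fin n → ℝ) : Prop :=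
  ContinuousOn x (Icc a b) ∧
  IntervalIntegrable (fun σ => (F σ).mulVec (x σ) + (G σ * Qh σ).mulVec (u σ)) volume a b ∧
  x a = P0h.mulVec ξ ∧
  ∀ τ ∈ Icc a b, x τ = x a + ∫ σ in a..τ, ((F σ).mulVec (x σ) + (G σ * Qh σ).mulVec (u σ))

/-- The least-squares objective of the deterministic smoothing problem. -/
def Jfun {n m d : ℕ} (a b : ℝ) (H : ℝ → Matrix (Fin m) (Fin n) ℝ)
    (R : ℝ → Matrix (Fin m) (Fin m) ℝ) (ST : Matrix (Fin n) (Fin n) ℝ)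
    (ytil : ℝ → Fin m → ℝ) (ξ : Fin n → ℝ) (u : ℝ → Fin d → ℝ) (x : ℝ → Fin n → ℝ) : ℝ :=
  dotProduct ξ ξ + dotProduct (ST.mulVec (x b)) (x b)
    + (∫ τ in a..b, dotProduct (u τ) (u τ))
    + (∫ τ in a..b, dotProduct ((hrh H R τ).mulVec (x τ)) (x τ))
    - 2 * ∫ τ in a..b, dotProduct (ytil τ) (((R τ)⁻¹ * H τ).mulVec (x τ))
/-- The Hamiltonian matrix `[[F, -GQG*], [-H*R⁻¹H, -F*]]`. -/
def hamMat {n m d : ℕ} (F : ℝ → Matrix (Fin n) (Fin n) ℝ)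
    (G : ℝ → Matrix (Fin n) (Fin d) ℝ) (Q : ℝ → Matrix (Fin d) (Fin d) ℝ)
    (H : ℝ → Matrix (Fin m) (Fin n) ℝ) (R : ℝ → Matrix (Fin m) (Fin m) ℝ) (t : ℝ) :
    Matrix (Fin n ⊕ Fin n) (Fin n ⊕ Fin n) ℝ :=
  Matrix.fromBlocks (F t) (-(gqg G Q t)) (-(hrh H R t)) (-(F t)ᵀ)

/-- `Φ̄(T,t) = [[I,0],[-ΣT,I]] · Φ_𝐇(T,t)`. -/
def phiBar {n : ℕ} (ST : Matrix (Fin n) (Fin n) ℝ)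
    (PhiH : ℝ → ℝ → Matrix (Fin n ⊕ Fin n) (Fin n ⊕ Fin n) ℝ) (T t : ℝ) :
    Matrix (Fin n ⊕ Fin n) (Fin n ⊕ Fin n) ℝ :=
  Matrix.fromBlocks 1 0 (-ST) 1 * PhiH T t

/-! ### Scalar absolutely continuous functions and Grönwall's inequality -/

/-- `f` is absolutely continuous on `[a,b]` with (a.e.) derivative `f'`, encoded by its integral
representation: `f' ∈ L¹` and `f s = f a + ∫ₐˢ f'`. -/
def Prim (a b : ℝ) (f f' : ℝ → ℝ) : Prop :=
  IntervalIntegrable f' volume a b ∧ ∀ s ∈ Icc a b, f s = f a + ∫ τ in a..s, f' τ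

section Scalar

variable {a b : ℝ} {f g f' g' : ℝ → ℝ}

lemma ii_mono {E : Type*} [NormedAddCommGroup E] {f : ℝ → E} {c d : ℝ}
    (h : IntervalIntegrable f volume a b) (hab : a ≤ b)
    (hc : c ∈ Icc a b) (hd : d ∈ Icc a b) : IntervalIntegrable f volume c d :=
  h.mono_set (by rw [uIcc_of_le hab]; exact uIcc_subset_Icc hc hd)

lemma Prim.continuousOn (hf : Prim a b f f') (hab : a ≤ b) : ContinuousOn f (Icc a b) := by
  have h := intervalIntegral.continuousOn_primitive_interval' hf.1 (left_mem_uIcc)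
  rw [uIcc_of_le hab] at h
  exact (continuousOn_const.add h).congr hf.2

lemma Prim.sub_eq (hf : Prim a b f f') (hab : a ≤ b) {s t : ℝ} (hs : s ∈ Icc a b)
    (hst : t ∈ Icc a b) : ∫ τ in s..t, f' τ = f t - f s := by
  have ha : a ∈ Icc a b := left_mem_Icc.2 hab
  rw [hf.2 t hst, hf.2 s hs, ← intervalIntegral.integral_interval_sub_left
    (ii_mono hf.1 hab ha hst) (ii_mono hf.1 hab ha hs)]
  ring

/-- The integral representation may be based at any point `t` of the interval. -/
lemma Prim.of_base {c t : ℝ} (hab : a ≤ b) (hg : IntervalIntegrable g volume a b)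
    (htm : t ∈ Icc a b) (h : ∀ s ∈ Icc a b, f s = c + ∫ τ in t..s, g τ) : Prim a b f g := by
  have ha : a ∈ Icc a b := left_mem_Icc.2 hab
  refine ⟨hg, fun s hs => ?_⟩
  rw [h s hs, h a ha, add_assoc, intervalIntegral.integral_add_adjacent_intervals
    (ii_mono hg hab htm ha) (ii_mono hg hab ha hs)]

lemma Prim.of_integral (hab : a ≤ b) (hg : IntervalIntegrable g volume a b) {t : ℝ}
    (htm : t ∈ Icc a b) : Prim a b (fun s => ∫ τ in t..s, g τ) g :=
  Prim.of_base (c := 0) hab hg htm fun s _ => by simp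

lemma Prim.congr (hf : Prim a b f f') (hab : a ≤ b) (h : ∀ s ∈ Icc a b, f s = g s)
    (h' : ∀ s ∈ Icc a b, f' s = g' s) : Prim a b g g' := by
  have ha : a ∈ Icc a b := left_mem_Icc.2 hab
  refine ⟨hf.1.congr fun s hs => ?_, fun s hs => ?_⟩
  · rw [uIoc_of_le hab] at hs
    exact h' s (Ioc_subset_Icc_self hs)
  · rw [← h s hs, ← h a ha, hf.2 s hs]
    congr 1
    refine intervalIntegral.integral_congr fun x hx => h' x ?_
    exact uIcc_subset_Icc ha hs hx

lemma Prim.const (c : ℝ) : Prim a b (fun _ => c) (fun _ => 0) :=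
  ⟨intervalIntegrable_const, fun s _ => by simp⟩

lemma Prim.add (hf : Prim a b f f') (hg : Prim a b g g') (hab : a ≤ b) :
    Prim a b (fun t => f t + g t) (fun t => f' t + g' t) := by
  have ha : a ∈ Icc a b := left_mem_Icc.2 hab
  refine ⟨hf.1.add hg.1, fun s hs => ?_⟩
  rw [intervalIntegral.integral_add (ii_mono hf.1 hab ha hs) (ii_mono hg.1 hab ha hs)]
  change f s + g s = f a + g a + _
  rw [hf.2 s hs, hg.2 s hs]
  ring

lemma Prim.neg (hf : Prim a b f f') : Prim a b (fun t => -f t) (fun t => -f' t) := by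
  refine ⟨hf.1.neg, fun s hs => ?_⟩
  rw [intervalIntegral.integral_neg]
  change -f s = -f a + _
  rw [hf.2 s hs]
  ring

lemma Prim.sub (hf : Prim a b f f') (hg : Prim a b g g') (hab : a ≤ b) :
    Prim a b (fun t => f t - g t) (fun t => f' t - g' t) := by
  simpa [sub_eq_add_neg] using hf.add hg.neg hab

lemma Prim.sum {ι : Type*} (S : Finset ι) {f f' : ι → ℝ → ℝ} (hab : a ≤ b)
    (h : ∀ i ∈ S, Prim a b (f i) (f' i)) :
    Prim a b (fun t => ∑ i ∈ S, f i t) (fun t => ∑ i ∈ S, f' i t) := by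
  classical
  induction S using Finset.induction_on with
  | empty => simpa using Prim.const 0
  | insert i S hi ih =>
    simp only [Finset.sum_insert hi]
    exact (h i (by simp)).add (ih fun j hj => h j (by simp [hj])) hab

/-- The integral representation of `f`, defined on all of `ℝ`, rather than `f` itself, since `f` is
controlled only on `[a,b]`. -/
lemma Prim.absCont (hf : Prim a b f f') :
    AbsolutelyContinuousOnInterval (fun s => f a + ∫ τ in a..s, f' τ) a b :=
  (LipschitzOnWith.absolutelyContinuousOnInterval (K := 0)
    (LipschitzWith.const (f a)).lipschitzOnWith).fun_add
    (hf.1.absolutelyContinuousOnInterval_intervalIntegral left_mem_uIcc)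

/-- The product rule for absolutely continuous functions. -/
lemma Prim.mul (hf : Prim a b f f') (hg : Prim a b g g') (hab : a ≤ b) :
    Prim a b (fun t => f t * g t) (fun t => f' t * g t + f t * g' t) := by
  have ha : a ∈ Icc a b := left_mem_Icc.2 hab
  have hii : IntervalIntegrable (fun t => f' t * g t + f t * g' t) volume a b := by
    have h1 := hf.continuousOn hab
    have h2 := hg.continuousOn hab
    rw [← uIcc_of_le hab] at h1 h2
    exact (hf.1.mul_continuousOn h2).add (hg.1.continuousOn_mul h1)
  refine ⟨hii, fun s hs => ?_⟩
  have hsub : uIcc a s ⊆ uIcc a b := by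
    rw [uIcc_of_le hab]; exact uIcc_subset_Icc ha hs
  have h := AbsolutelyContinuousOnInterval.integral_deriv_mul_eq_sub
    ((hf.absCont).mono hsub) ((hg.absCont).mono hsub)
  simp only [intervalIntegral.integral_same, add_zero] at h
  rw [← hf.2 s hs, ← hg.2 s hs] at h
  rw [← sub_eq_iff_eq_add', ← h]
  refine intervalIntegral.integral_congr_ae ?_
  -- Lebesgue differentiation identifies the derivatives of both factors almost everywhere.
  filter_upwards [hf.1.ae_hasDerivAt_integral, hg.1.ae_hasDerivAt_integral] with x hx1 hx2 hx
  have hx' : x ∈ uIcc a b := hsub (uIoc_subset_uIcc hx)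
  have hxI : x ∈ Icc a b := by rwa [uIcc_of_le hab] at hx'
  rw [((hx1 hx' a left_mem_uIcc).const_add (f a)).deriv,
    ((hx2 hx' a left_mem_uIcc).const_add (g a)).deriv, ← hf.2 x hxI, ← hg.2 x hxI]

lemma Prim.pow_div_factorial (hf : Prim a b f f') (hab : a ≤ b) (n : ℕ) :
    Prim a b (fun t => f t ^ (n + 1) / (n + 1).factorial)
      (fun t => f' t * (f t ^ n / n.factorial)) := by
  induction n with
  | zero => simpa using hf
  | succ n ih =>
    have h := ((Prim.const (a := a) (b := b) ((n + 2 : ℝ)⁻¹)).mul (hf.mul ih hab) hab)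
    have h0 : ((n : ℝ) + 2) ≠ 0 := by positivity
    have h1 : ((n : ℝ) + 1) ≠ 0 := by positivity
    have hfac : ((n.factorial : ℕ) : ℝ) ≠ 0 := by positivity
    refine h.congr hab (fun s _ => ?_) (fun s _ => ?_)
    · simp only [Nat.factorial_succ]; push_cast; field_simp; ring
    · simp only [Nat.factorial_succ]; push_cast; field_simp; ring

/-- Grönwall's inequality with an integrable kernel and zero initial value; iterating the
hypothesis yields `u ≤ C Kⁿ / n!` with `K = ∫ k`. -/
lemma gronwall {k u : ℝ → ℝ} (hab : a ≤ b) (hk : IntervalIntegrable k volume a b)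
    (hk0 : ∀ t ∈ Icc a b, 0 ≤ k t) (hu : ContinuousOn u (Icc a b))
    (h : ∀ s ∈ Icc a b, u s ≤ ∫ τ in a..s, k τ * u τ) :
    ∀ s ∈ Icc a b, u s ≤ 0 := by
  have ha : a ∈ Icc a b := left_mem_Icc.2 hab
  obtain ⟨C, hC⟩ := isCompact_Icc.exists_bound_of_continuousOn hu
  set K : ℝ → ℝ := fun s => ∫ τ in a..s, k τ with hK
  have hKp : Prim a b K k := Prim.of_integral hab hk ha
  have hK0 : K a = 0 := by simp [hK]
  have key : ∀ n : ℕ, ∀ s ∈ Icc a b, u s ≤ C * (K s ^ n / n.factorial) := by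
    intro n
    induction n with
    | zero => intro s hs; simpa using (le_abs_self _).trans (hC s hs)
    | succ n ih =>
      intro s hs
      have hp := (Prim.const (a := a) (b := b) C).mul (hKp.pow_div_factorial hab n) hab
      have hint := hp.2 s hs
      simp only [hK0, ne_eq, Nat.add_eq_zero_iff, one_ne_zero, and_false, not_false_eq_true,
        zero_pow, zero_div, mul_zero, zero_add] at hint
      rw [hint]
      refine (h s hs).trans (intervalIntegral.integral_mono_on hs.1 ?_ ?_ fun x hx => ?_)
      · refine ii_mono (hk.mul_continuousOn ?_) hab ha hs
        rwa [uIcc_of_le hab]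
      · simpa using ii_mono hp.1 hab ha hs
      · have hx' : x ∈ Icc a b := ⟨hx.1, hx.2.trans hs.2⟩
        have := mul_le_mul_of_nonneg_left (ih x hx') (hk0 x hx')
        simp only [zero_mul, zero_add]
        linarith
  intro s hs
  have hlim := (FloorSemiring.tendsto_pow_div_factorial_atTop (K s)).const_mul C
  rw [mul_zero] at hlim
  exact ge_of_tendsto' hlim fun n => key n s hs

end Scalar

/-! ### Matrix- and vector-valued absolutely continuous functions -/

/-- Entrywise `Prim` for matrix-valued functions: `X` is absolutely continuous with
derivative `X'`. -/
def MPrim {ι κ : Type*} (a b : ℝ) (X X' : ℝ → Matrix ι κ ℝ) : Prop :=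
  ∀ i j, Prim a b (fun t => X t i j) (fun t => X' t i j)

/-- Componentwise `Prim` for vector-valued functions. -/
def VPrim {ι : Type*} (a b : ℝ) (x x' : ℝ → ι → ℝ) : Prop :=
  ∀ i, Prim a b (fun t => x t i) (fun t => x' t i)

section MatrixCalculus

variable {a b : ℝ} {ι κ : Type*} {l : Type*}

lemma ii_sum {α : Type*} (S : Finset α) {f : α → ℝ → ℝ}
    (h : ∀ i ∈ S, IntervalIntegrable (f i) volume a b) :
    IntervalIntegrable (fun t => ∑ i ∈ S, f i t) volume a b := by
  have := IntervalIntegrable.sum S h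
  simpa [Finset.sum_fn] using this

lemma MPrim.continuousOn {X X' : ℝ → Matrix ι κ ℝ} (h : MPrim a b X X') (hab : a ≤ b) :
    MatContOn X (Icc a b) := fun i j => (h i j).continuousOn hab

lemma MPrim.entry {X X' : ℝ → Matrix ι κ ℝ} (h : MPrim a b X X') {s : ℝ} (hs : s ∈ Icc a b)
    (i : ι) (j : κ) : X s i j = X a i j + ∫ τ in a..s, X' τ i j := (h i j).2 s hs

lemma VPrim.entry {x x' : ℝ → ι → ℝ} (h : VPrim a b x x') {s : ℝ} (hs : s ∈ Icc a b)
    (i : ι) : x s i = x a i + ∫ τ in a..s, x' τ i := (h i).2 s hs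

lemma MatII.mul_cont [Fintype ι] {X : ℝ → Matrix l ι ℝ} {Y : ℝ → Matrix ι κ ℝ} (hab : a ≤ b)
    (hX : MatII X a b) (hY : MatContOn Y (Icc a b)) : MatII (fun t => X t * Y t) a b := by
  intro i j
  simp only [Matrix.mul_apply]
  refine ii_sum _ fun k _ => (hX i k).mul_continuousOn ?_
  rw [uIcc_of_le hab]; exact hY k j

lemma MatII.cont_mul [Fintype ι] {X : ℝ → Matrix l ι ℝ} {Y : ℝ → Matrix ι κ ℝ} (hab : a ≤ b)
    (hX : MatContOn X (Icc a b)) (hY : MatII Y a b) : MatII (fun t => X t * Y t) a b := by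
  intro i j
  simp only [Matrix.mul_apply]
  refine ii_sum _ fun k _ => (hY k j).continuousOn_mul ?_
  rw [uIcc_of_le hab]; exact hX i k

lemma ii_cont_mulVec [Fintype ι] {X : ℝ → Matrix l ι ℝ} {y : ℝ → ι → ℝ} (hab : a ≤ b)
    (hX : MatContOn X (Icc a b)) (hy : ∀ i, IntervalIntegrable (fun t => y t i) volume a b) :
    ∀ i, IntervalIntegrable (fun t => (X t *ᵥ y t) i) volume a b := by
  intro i
  simp only [Matrix.mulVec, dotProduct]
  refine ii_sum _ fun k _ => (hy k).continuousOn_mul ?_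
  rw [uIcc_of_le hab]; exact hX i k

lemma MPrim.congr {X X' Y Y' : ℝ → Matrix ι κ ℝ} (h : MPrim a b X X') (hab : a ≤ b)
    (h1 : ∀ s ∈ Icc a b, X s = Y s) (h2 : ∀ s ∈ Icc a b, X' s = Y' s) : MPrim a b Y Y' :=
  fun i j => (h i j).congr hab (fun s hs => by rw [h1 s hs]) (fun s hs => by rw [h2 s hs])

lemma VPrim.congr {X X' Y Y' : ℝ → ι → ℝ} (h : VPrim a b X X') (hab : a ≤ b)
    (h1 : ∀ s ∈ Icc a b, X s = Y s) (h2 : ∀ s ∈ Icc a b, X' s = Y' s) : VPrim a b Y Y' :=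
  fun i => (h i).congr hab (fun s hs => by rw [h1 s hs]) (fun s hs => by rw [h2 s hs])

lemma MPrim.transpose {X X' : ℝ → Matrix ι κ ℝ} (h : MPrim a b X X') :
    MPrim a b (fun t => (X t)ᵀ) (fun t => (X' t)ᵀ) := fun i j => h j i

lemma MPrim.sub {X X' Y Y' : ℝ → Matrix ι κ ℝ} (h : MPrim a b X X') (h' : MPrim a b Y Y')
    (hab : a ≤ b) : MPrim a b (fun t => X t - Y t) (fun t => X' t - Y' t) :=
  fun i j => (h i j).sub (h' i j) hab

lemma MPrim.const (C : Matrix ι κ ℝ) : MPrim a b (fun _ => C) (fun _ => 0) :=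
  fun i j => by simpa using Prim.const (C i j)

lemma MPrim.mul [Fintype ι] {X X' : ℝ → Matrix l ι ℝ} {Y Y' : ℝ → Matrix ι κ ℝ}
    (h : MPrim a b X X') (h' : MPrim a b Y Y') (hab : a ≤ b) :
    MPrim a b (fun t => X t * Y t) (fun t => X' t * Y t + X t * Y' t) := by
  intro i j
  simp only [Matrix.add_apply, Matrix.mul_apply, ← Finset.sum_add_distrib]
  exact Prim.sum _ hab fun k _ => (h i k).mul (h' k j) hab

lemma VPrim.add {x x' y y' : ℝ → ι → ℝ} (h : VPrim a b x x') (h' : VPrim a b y y')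
    (hab : a ≤ b) : VPrim a b (fun t => x t + y t) (fun t => x' t + y' t) :=
  fun i => (h i).add (h' i) hab

lemma VPrim.sub {x x' y y' : ℝ → ι → ℝ} (h : VPrim a b x x') (h' : VPrim a b y y')
    (hab : a ≤ b) : VPrim a b (fun t => x t - y t) (fun t => x' t - y' t) :=
  fun i => (h i).sub (h' i) hab

lemma MPrim.mulVec [Fintype ι] {X X' : ℝ → Matrix l ι ℝ} {y y' : ℝ → ι → ℝ} (h : MPrim a b X X')
    (h' : VPrim a b y y') (hab : a ≤ b) :
    VPrim a b (fun t => X t *ᵥ y t) (fun t => X' t *ᵥ y t + X t *ᵥ y' t) := by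
  intro i
  simp only [Pi.add_apply, Matrix.mulVec, dotProduct, ← Finset.sum_add_distrib]
  exact Prim.sum _ hab fun k _ => (h i k).mul (h' k) hab

lemma MPrim.of_base {C : Matrix ι κ ℝ} {X Y : ℝ → Matrix ι κ ℝ} {t : ℝ} (hab : a ≤ b)
    (hY : MatII Y a b) (htm : t ∈ Icc a b) (h : ∀ s ∈ Icc a b, X s = C + matInt Y t s) :
    MPrim a b X Y :=
  fun i j => Prim.of_base hab (hY i j) htm (c := C i j) fun s hs => by rw [h s hs]; rfl

lemma MPrim.eq_of_deriv_zero {X X' : ℝ → Matrix ι κ ℝ} (h : MPrim a b X X')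
    (h0 : ∀ s ∈ Icc a b, X' s = 0) : ∀ s ∈ Icc a b, X s = X a := by
  intro s hs
  ext i j
  rw [h.entry hs, intervalIntegral.integral_congr (g := fun _ => 0)]
  · simp
  · intro x hx
    have hx' : x ∈ Icc a b := by
      rw [uIcc_of_le hs.1] at hx
      exact ⟨hx.1, hx.2.trans hs.2⟩
    simp [h0 x hx']

/-- Uniqueness for the linear Carathéodory equation `x' = A x`: a solution vanishing at the left
endpoint vanishes identically. -/
lemma VPrim.eq_zero [Fintype ι] {A : ℝ → Matrix ι ι ℝ} {x : ℝ → ι → ℝ} (hab : a ≤ b)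
    (hA : MatII A a b) (h : VPrim a b x (fun t => A t *ᵥ x t)) (h0 : x a = 0) :
    ∀ s ∈ Icc a b, x s = 0 := by
  have ha : a ∈ Icc a b := left_mem_Icc.2 hab
  have hc : ∀ i, ContinuousOn (fun t => x t i) (Icc a b) := fun i => (h i).continuousOn hab
  have hu : ContinuousOn (fun t => ∑ i, |x t i|) (Icc a b) :=
    continuousOn_finsetSum _ fun i _ => (hc i).abs
  have hk : IntervalIntegrable (fun t => ∑ i, ∑ j, |A t i j|) volume a b :=
    ii_sum _ fun i _ => ii_sum _ fun j _ => (hA i j).abs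
  have key := gronwall hab hk (fun t _ => by positivity) hu ?_
  · intro s hs
    have h1 := key s hs
    have h2 : ∑ i, |x s i| = 0 := le_antisymm h1 (by positivity)
    rw [Finset.sum_eq_zero_iff_of_nonneg (fun _ _ => abs_nonneg _)] at h2
    funext i
    simpa using h2 i (Finset.mem_univ i)
  · intro s hs
    have hii : ∀ i, IntervalIntegrable (fun t => |(A t *ᵥ x t) i|) volume a s :=
      fun i => ii_mono (h i).1.abs hab ha hs
    calc ∑ i, |x s i| ≤ ∑ i, ∫ τ in a..s, |(A τ *ᵥ x τ) i| := by
          refine Finset.sum_le_sum fun i _ => ?_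
          rw [h.entry hs, h0]
          simpa using intervalIntegral.abs_integral_le_integral_abs hs.1
      _ = ∫ τ in a..s, ∑ i, |(A τ *ᵥ x τ) i| :=
          (intervalIntegral.integral_finsetSum fun i _ => hii i).symm
      _ ≤ _ := by
          refine intervalIntegral.integral_mono_on hs.1 (ii_sum _ fun i _ => hii i) ?_ ?_
          · refine ii_mono (hk.mul_continuousOn ?_) hab ha hs
            rwa [uIcc_of_le hab]
          · intro τ _
            rw [Finset.sum_mul]
            refine Finset.sum_le_sum fun i _ => ?_
            simp only [Matrix.mulVec, dotProduct]
            refine (Finset.abs_sum_le_sum_abs _ _).trans ?_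
            rw [Finset.sum_mul]
            refine Finset.sum_le_sum fun j _ => ?_
            rw [abs_mul]
            exact mul_le_mul_of_nonneg_left
              (Finset.single_le_sum (f := fun i => |x τ i|) (fun _ _ => abs_nonneg _)
                (Finset.mem_univ j)) (abs_nonneg _)

lemma MPrim.eq_zero [Fintype ι] {A : ℝ → Matrix ι ι ℝ} {X : ℝ → Matrix ι κ ℝ} (hab : a ≤ b)
    (hA : MatII A a b) (h : MPrim a b X (fun t => A t * X t)) (h0 : X a = 0) :
    ∀ s ∈ Icc a b, X s = 0 := by
  intro s hs
  ext i j
  have := VPrim.eq_zero (x := fun t i => X t i j) hab hA (fun i => h i j)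
    (by funext i; simp [h0]) s hs
  exact congrFun this i

lemma matInt_congr {X Y : ℝ → Matrix ι κ ℝ} {c d : ℝ} (hcd : c ≤ d)
    (h : ∀ t ∈ Icc c d, X t = Y t) : matInt X c d = matInt Y c d := by
  ext i j
  refine intervalIntegral.integral_congr fun x hx => ?_
  rw [uIcc_of_le hcd] at hx
  simp only [h x hx]

lemma matInt_const_mul_mul [Fintype ι] [Fintype κ] {α β : Type*} {X : ℝ → Matrix ι κ ℝ}
    {c d : ℝ} (hX : MatII X c d) (C : Matrix α ι ℝ) (D : Matrix κ β ℝ) :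
    matInt (fun t => C * X t * D) c d = C * matInt X c d * D := by
  ext i j
  have h1 : ∀ k l, IntervalIntegrable (fun t => C i l * X t l k * D k j) volume c d :=
    fun k l => ((hX l k).const_mul _).mul_const _
  simp only [matInt, Matrix.of_apply, Matrix.mul_apply, Finset.sum_mul]
  rw [intervalIntegral.integral_finsetSum fun k _ => ii_sum _ fun l _ => h1 k l]
  refine Finset.sum_congr rfl fun k _ => ?_
  rw [intervalIntegral.integral_finsetSum fun l _ => h1 k l]
  refine Finset.sum_congr rfl fun l _ => ?_
  rw [intervalIntegral.integral_mul_const, intervalIntegral.integral_const_mul]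

lemma MPrim.posSemidef [Fintype ι] {M M' : ℝ → Matrix ι ι ℝ} (hab : a ≤ b) (h : MPrim a b M M')
    (h0 : (M a).PosSemidef) (h' : ∀ t ∈ Icc a b, (M' t).PosSemidef) : (M b).PosSemidef := by
  have hb : b ∈ Icc a b := right_mem_Icc.2 hab
  refine .of_dotProduct_mulVec_nonneg ?_ fun z => ?_
  · ext i j
    rw [Matrix.conjTranspose_apply, star_trivial, h.entry hb, h.entry hb]
    have e1 : M a j i = M a i j := by simpa using h0.1.apply i j
    rw [e1]
    congr 1
    refine intervalIntegral.integral_congr fun x hx => ?_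
    rw [uIcc_of_le hab] at hx
    simpa using (h' x hx).1.apply i j
  · have hp : Prim a b (fun t => z ⬝ᵥ (M t *ᵥ z)) (fun t => z ⬝ᵥ (M' t *ᵥ z)) := by
      simp only [dotProduct, Matrix.mulVec]
      have := Prim.sum (Finset.univ : Finset ι) hab fun i _ =>
        (Prim.const (z i)).mul (Prim.sum (Finset.univ : Finset ι) hab fun j _ =>
          (h i j).mul (Prim.const (z j)) hab) hab
      simpa using this
    have hpb := hp.2 b hb
    simp only at hpb
    rw [star_trivial, hpb]
    have h1 := h0.dotProduct_mulVec_nonneg z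
    rw [star_trivial] at h1
    refine add_nonneg h1 (intervalIntegral.integral_nonneg hab fun t htm => ?_)
    simpa using (h' t htm).dotProduct_mulVec_nonneg z

end MatrixCalculus

section Vector

variable {a b : ℝ} {ι : Type*} [Fintype ι]

lemma ii_apply {y : ℝ → ι → ℝ} (h : IntervalIntegrable y volume a b) (i : ι) :
    IntervalIntegrable (fun t => y t i) volume a b :=
  ⟨Integrable.eval h.1 i, Integrable.eval h.2 i⟩

lemma ii_pi {y : ℝ → ι → ℝ} (h : ∀ i, IntervalIntegrable (fun t => y t i) volume a b) :
    IntervalIntegrable y volume a b :=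
  ⟨Integrable.of_eval fun i => (h i).1, Integrable.of_eval fun i => (h i).2⟩

lemma integral_apply {y : ℝ → ι → ℝ} (h : IntervalIntegrable y volume a b) (i : ι) :
    (∫ t in a..b, y t) i = ∫ t in a..b, y t i :=
  ((ContinuousLinearMap.proj (R := ℝ) (φ := fun _ : ι => ℝ) i).intervalIntegral_comp_comm h).symm

lemma VPrim.of_base {c : ι → ℝ} {x y : ℝ → ι → ℝ} {t : ℝ} (hab : a ≤ b)
    (hy : IntervalIntegrable y volume a b) (htm : t ∈ Icc a b)
    (h : ∀ s ∈ Icc a b, x s = c + ∫ τ in t..s, y τ) : VPrim a b x y := by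
  intro i
  refine Prim.of_base hab (ii_apply hy i) htm (c := c i) fun s hs => ?_
  have hts : IntervalIntegrable y volume t s :=
    hy.mono_set (by rw [uIcc_of_le hab]; exact (convex_Icc a b).ordConnected.uIcc_subset htm hs)
  rw [h s hs, Pi.add_apply, integral_apply hts]

end Vector

/-! ### State-transition matrices -/

section Transition

variable {a b : ℝ} {ι : Type*} [Fintype ι] [DecidableEq ι] {A : ℝ → Matrix ι ι ℝ}
  {Φ : ℝ → ℝ → Matrix ι ι ℝ}

lemma IsTransition.mprim (hab : a ≤ b) (hΦ : IsTransition a b A Φ) {t : ℝ} (htm : t ∈ Icc a b) :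
    MPrim a b (fun s => Φ s t) (fun s => A s * Φ s t) :=
  MPrim.of_base hab (hΦ t htm).2.1 htm (hΦ t htm).2.2

lemma IsTransition.self (hΦ : IsTransition a b A Φ) {t : ℝ} (htm : t ∈ Icc a b) :
    Φ t t = 1 := by
  rw [(hΦ t htm).2.2 t htm]
  ext i j
  simp [matInt]

/-- The semigroup property through the left endpoint, by uniqueness. -/
lemma IsTransition.comp (hab : a ≤ b) (hA : MatII A a b) (hΦ : IsTransition a b A Φ) {s t : ℝ}
    (hs : s ∈ Icc a b) (htm : t ∈ Icc a b) : Φ s t = Φ s a * Φ a t := by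
  have ha : a ∈ Icc a b := left_mem_Icc.2 hab
  have h := (hΦ.mprim hab htm).sub ((hΦ.mprim hab ha).mul (MPrim.const (Φ a t)) hab) hab
  have h2 := MPrim.eq_zero hab hA (h.congr hab (fun _ _ => rfl) fun s _ => ?_) ?_ s hs
  · exact sub_eq_zero.1 h2
  · simp only [Matrix.mul_zero, add_zero]
    rw [Matrix.mul_sub, Matrix.mul_assoc]
  · simp [hΦ.self ha]

lemma IsTransition.mul_inv (hab : a ≤ b) (hA : MatII A a b) (hΦ : IsTransition a b A Φ) {t : ℝ}
    (htm : t ∈ Icc a b) : Φ t a * Φ a t = 1 := by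
  rw [← hΦ.comp hab hA htm htm, hΦ.self htm]

/-- The adjoint equation `∂ₜ Φ(a,t) = -Φ(a,t) A(t)` in the second argument. A primitive `Z` of
`-Φ(a,·) A` is compared with `Φ(a,·)`: `(Z - Φ(a,·)) Φ(·,a)` solves a homogeneous linear
equation with zero initial value. -/
lemma IsTransition.mprim_snd (hab : a ≤ b) (hA : MatII A a b) (hΦ : IsTransition a b A Φ) :
    MPrim a b (fun t => Φ a t) (fun t => -(Φ a t * A t)) := by
  have ha : a ∈ Icc a b := left_mem_Icc.2 hab
  set X : ℝ → Matrix ι ι ℝ := fun t => Φ t a with hX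
  set Y : ℝ → Matrix ι ι ℝ := fun t => Φ a t with hY
  have hXY : ∀ t ∈ Icc a b, X t * Y t = 1 := fun t htm => hΦ.mul_inv hab hA htm
  have hYX : ∀ t ∈ Icc a b, Y t * X t = 1 := fun t htm => mul_eq_one_comm.1 (hXY t htm)
  have hXp : MPrim a b X (fun t => A t * X t) := hΦ.mprim hab ha
  have hXc : ContinuousOn X (Icc a b) :=
    continuousOn_pi.2 fun i => continuousOn_pi.2 fun j => hXp.continuousOn hab i j
  have hYc : MatContOn Y (Icc a b) := by
    have hdet : ∀ t ∈ Icc a b, (X t).det ≠ 0 := fun t htm h0 => by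
      have := congrArg Matrix.det (hXY t htm)
      rw [Matrix.det_mul, h0] at this
      simp at this
    have h1 : ContinuousOn (fun t => (X t).det) (Icc a b) :=
      (continuous_id.matrix_det).comp_continuousOn hXc
    have h2 : ContinuousOn (fun t => (X t).adjugate) (Icc a b) :=
      (continuous_id.matrix_adjugate).comp_continuousOn hXc
    have h3 := (h1.inv₀ hdet).smul h2
    have h4 : ContinuousOn Y (Icc a b) := h3.congr fun t htm => by
      rw [← Matrix.inv_eq_right_inv (hXY t htm), Matrix.inv_def, Ring.inverse_eq_inv']
      rfl
    exact fun i j => continuousOn_pi.1 (continuousOn_pi.1 h4 i) j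
  have hYA : MatII (fun t => Y t * A t) a b := MatII.cont_mul hab hYc hA
  have hYAn : MatII (fun t => -(Y t * A t)) a b := fun i j => (hYA i j).neg
  set Z : ℝ → Matrix ι ι ℝ := fun t => 1 + matInt (fun t => -(Y t * A t)) a t with hZ
  have hZp : MPrim a b Z (fun t => -(Y t * A t)) :=
    MPrim.of_base hab hYAn ha fun _ _ => rfl
  have hYAX : MatII (fun t => (Y t * A t * X t)ᵀ) a b := fun i j =>
    (MatII.mul_cont hab hYA (hXp.continuousOn hab)) j i
  have hE : MPrim a b (fun t => (Z t * X t - 1)ᵀ)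
      (fun t => (Y t * A t * X t)ᵀ * (Z t * X t - 1)ᵀ) := by
    refine (((hZp.mul hXp hab).sub (MPrim.const 1) hab).transpose).congr hab (fun _ _ => rfl) ?_
    intro t htm
    rw [← Matrix.transpose_mul]
    congr 1
    have h1 := hXY t htm
    calc _ = (Z t * 1 - Y t) * (A t * X t) := by noncomm_ring
      _ = (Z t * (X t * Y t) - Y t) * (A t * X t) := by rw [h1]
      _ = (Z t * X t - 1) * Y t * (A t * X t) := by noncomm_ring
      _ = _ := by simp only [Matrix.mul_assoc]
  have hE0 := MPrim.eq_zero hab hYAX hE (by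
    simp [hZ, hX, hΦ.self ha, matInt]
    rfl)
  refine hZp.congr hab (fun t htm => ?_) fun _ _ => rfl
  have h1 : Z t * X t - 1 = 0 := Matrix.transpose_eq_zero.1 (hE0 t htm)
  calc Z t = Z t * (X t * Y t) := by rw [hXY t htm, mul_one]
    _ = (Z t * X t) * Y t := by rw [Matrix.mul_assoc]
    _ = Y t := by rw [sub_eq_zero.1 h1, one_mul]

end Transition

/-! ### Semidefiniteness and integrability of the coefficients -/

section Coefficients

variable {n m d : ℕ}

lemma hrh_posSemidef {H : ℝ → Matrix (Fin m) (Fin n) ℝ} {R : ℝ → Matrix (Fin m) (Fin m) ℝ}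
    {t : ℝ} (hR : (R t).PosSemidef) : (hrh H R t).PosSemidef := by
  have := hR.inv.conjTranspose_mul_mul_same (H t)
  rwa [conjTranspose_eq_transpose_of_trivial] at this

lemma gqg_posSemidef {G : ℝ → Matrix (Fin n) (Fin d) ℝ} {Q : ℝ → Matrix (Fin d) (Fin d) ℝ}
    {t : ℝ} (hQ : (Q t).PosSemidef) : (gqg G Q t).PosSemidef := by
  have := hQ.mul_mul_conjTranspose_same (G t)
  rwa [conjTranspose_eq_transpose_of_trivial] at this

/-- `R ⪰ r I` gives `r |R⁻¹ eⱼ|² ≤ (R⁻¹ eⱼ)ⱼ`, which bounds every entry of `R⁻¹` by `1/r`. -/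
lemma abs_inv_entry_le {M : Matrix (Fin m) (Fin m) ℝ} {r : ℝ} (hr : 0 < r)
    (h : (M - r • (1 : Matrix (Fin m) (Fin m) ℝ)).PosSemidef) (i j : Fin m) :
    |M⁻¹ i j| ≤ r⁻¹ := by
  have hM : M.PosDef := by
    have := (PosDef.smul (PosDef.one (n := Fin m) (R := ℝ)) hr).add_posSemidef h
    simpa using this
  set x : Fin m → ℝ := M⁻¹ *ᵥ Pi.single j 1 with hx
  have hxi : ∀ k, x k = M⁻¹ k j := fun k => by simp [hx]
  have hMx : M *ᵥ x = Pi.single j 1 := by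
    rw [hx, Matrix.mulVec_mulVec, Matrix.mul_nonsing_inv _ ((isUnit_iff_isUnit_det _).1 hM.isUnit),
      Matrix.one_mulVec]
  have h1 := h.dotProduct_mulVec_nonneg x
  rw [star_trivial, Matrix.sub_mulVec, hMx, Matrix.smul_mulVec, Matrix.one_mulVec,
    dotProduct_sub, dotProduct_smul, dotProduct_single, mul_one, smul_eq_mul] at h1
  have hle : ∀ k, x k ^ 2 ≤ x ⬝ᵥ x := fun k => by
    rw [dotProduct, sq]
    exact Finset.single_le_sum (f := fun k => x k * x k) (fun _ _ => mul_self_nonneg _)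
      (Finset.mem_univ k)
  have hj := hle j
  have hi := hle i
  rw [← hxi]
  have hr' : r * r⁻¹ = 1 := mul_inv_cancel₀ hr.ne'
  have hri : 0 < r⁻¹ := inv_pos.2 hr
  have hxj0 : 0 ≤ x j := by nlinarith [sq_nonneg (x j)]
  have hxj : x j ≤ r⁻¹ := by
    by_contra! hc
    have : 0 < x j := hri.trans hc
    have : r * x j ^ 2 ≤ x j := by nlinarith
    have : 1 < r * x j := by nlinarith
    nlinarith
  refine abs_le_of_sq_le_sq ?_ hri.le
  have : r * x i ^ 2 ≤ r⁻¹ := by nlinarith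
  calc x i ^ 2 = r⁻¹ * (r * x i ^ 2) := by field_simp
    _ ≤ r⁻¹ * r⁻¹ := by gcongr
    _ = r⁻¹ ^ 2 := (sq _).symm

lemma hrh_matII {a b r : ℝ} (hab : a ≤ b) (hr : 0 < r) {H : ℝ → Matrix (Fin m) (Fin n) ℝ}
    {R : ℝ → Matrix (Fin m) (Fin m) ℝ} (hH : MatL2 H a b) (hR : MatL2 R a b)
    (hRbd : ∀ t ∈ Icc a b, (R t - r • (1 : Matrix (Fin m) (Fin m) ℝ)).PosSemidef) :
    MatII (hrh H R) a b := by
  have hae : ∀ᵐ t ∂(volume.restrict (Ioc a b)), t ∈ Icc a b :=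
    (ae_restrict_mem measurableSet_Ioc).mono fun t h => Ioc_subset_Icc_self h
  have hRm : AEMeasurable (fun t => fun i j => R t i j) (volume.restrict (Ioc a b)) := by
    refine aemeasurable_pi_lambda _ fun i => aemeasurable_pi_lambda _ fun j => ?_
    exact ((intervalIntegrable_iff_integrableOn_Ioc_of_le hab).1
      (hR i j).1).aestronglyMeasurable.aemeasurable
  have hRim : ∀ i j, AEMeasurable (fun t => (R t)⁻¹ i j) (volume.restrict (Ioc a b)) := by
    intro i j
    have h1 : Continuous fun M : Fin m → Fin m → ℝ => (Matrix.of M).det :=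
      Continuous.matrix_det continuous_id
    have h2 : Continuous fun M : Fin m → Fin m → ℝ => (Matrix.of M).adjugate i j :=
      (Continuous.matrix_adjugate (A := fun M : Fin m → Fin m → ℝ => Matrix.of M)
        continuous_id).matrix_elem i j
    have h3 := ((h1.measurable.comp_aemeasurable hRm).inv).mul (h2.measurable.comp_aemeasurable hRm)
    refine h3.congr (Eventually.of_forall fun t => ?_)
    simp only [Matrix.inv_def, Ring.inverse_eq_inv', Matrix.smul_apply, smul_eq_mul]
    rfl
  intro i j
  simp only [hrh, Matrix.mul_apply, Matrix.transpose_apply, Finset.sum_mul]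
  refine ii_sum _ fun k _ => ii_sum _ fun l _ => ?_
  have hHl := (intervalIntegrable_iff_integrableOn_Ioc_of_le hab).1 (hH l i).1
  have hHk := (intervalIntegrable_iff_integrableOn_Ioc_of_le hab).1 (hH k j).1
  have hdom : IntervalIntegrable (fun t => r⁻¹ * (H t l i ^ 2 + H t k j ^ 2)) volume a b :=
    ((hH l i).2.add (hH k j).2).const_mul _
  rw [intervalIntegrable_iff_integrableOn_Ioc_of_le hab] at hdom ⊢
  refine Integrable.mono' hdom ((hHl.aestronglyMeasurable.mul
    (hRim l k).aestronglyMeasurable).mul hHk.aestronglyMeasurable) ?_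
  filter_upwards [hae] with t htm
  have hb := abs_inv_entry_le hr (hRbd t htm) l k
  have hri : 0 < r⁻¹ := inv_pos.2 hr
  rw [Real.norm_eq_abs, abs_mul, abs_mul]
  calc |H t l i| * |(R t)⁻¹ l k| * |H t k j|
      = |(R t)⁻¹ l k| * (|H t l i| * |H t k j|) := by ring
    _ ≤ r⁻¹ * (|H t l i| * |H t k j|) := by gcongr
    _ ≤ r⁻¹ * (H t l i ^ 2 + H t k j ^ 2) := by
        gcongr
        rw [← sq_abs (H t l i), ← sq_abs (H t k j)]
        nlinarith [sq_nonneg (|H t l i| - |H t k j|), sq_nonneg (|H t l i|),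
          sq_nonneg (|H t k j|)]

end Coefficients

/-! ### Symmetry and semidefiniteness of the Riccati solution, and the terminal condition -/

section Riccati

variable {a b : ℝ} {ι : Type*} [Fintype ι] [DecidableEq ι] {F V W P X Y : ℝ → Matrix ι ι ℝ}

/-- The antisymmetric part `D = P - Pᵀ` solves `D' = A D + D Aᵀ` with `A = F - P V`, so that
`Y D Yᵀ` is constant. -/
lemma riccati_symm (hab : a ≤ b)
    (hV : ∀ t ∈ Icc a b, (V t)ᵀ = V t) (hW : ∀ t ∈ Icc a b, (W t)ᵀ = W t)
    (hP : MPrim a b P fun t => F t * P t + P t * (F t)ᵀ - P t * V t * P t + W t)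
    (hP0 : (P a)ᵀ = P a)
    (hY : MPrim a b Y fun t => -(Y t * (F t - P t * V t)))
    (hXY : ∀ t ∈ Icc a b, X t * Y t = 1) : ∀ s ∈ Icc a b, (P s)ᵀ = P s := by
  have h := ((hY.mul (hP.sub hP.transpose hab) hab).mul hY.transpose hab).eq_of_deriv_zero
    fun t htm => by
      simp only [Matrix.transpose_add, Matrix.transpose_sub, Matrix.transpose_mul,
        Matrix.transpose_transpose, Matrix.transpose_neg, hV t htm, hW t htm]
      noncomm_ring
  intro s hs
  have h1 : Y s * (P s - (P s)ᵀ) * (Y s)ᵀ = 0 := by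
    rw [h s hs, hP0]; simp
  have h2 : P s - (P s)ᵀ = 0 := by
    calc P s - (P s)ᵀ = (X s * Y s) * (P s - (P s)ᵀ) * (X s * Y s)ᵀ := by
          rw [hXY s hs]; simp
      _ = X s * (Y s * (P s - (P s)ᵀ) * (Y s)ᵀ) * (X s)ᵀ := by
          rw [Matrix.transpose_mul]; simp only [Matrix.mul_assoc]
      _ = 0 := by rw [h1]; simp
  exact (sub_eq_zero.1 h2).symm

/-- In the coordinates of the closed-loop flow, `(Y P Yᵀ)' = Y (P V P + W) Yᵀ ⪰ 0`. -/
lemma riccati_posSemidef (hab : a ≤ b)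
    (hV : ∀ t ∈ Icc a b, (V t).PosSemidef) (hW : ∀ t ∈ Icc a b, (W t).PosSemidef)
    (hP : MPrim a b P fun t => F t * P t + P t * (F t)ᵀ - P t * V t * P t + W t)
    (hPs : ∀ t ∈ Icc a b, (P t)ᵀ = P t) (hP0 : (P a).PosSemidef)
    (hY : MPrim a b Y fun t => -(Y t * (F t - P t * V t)))
    (hXY : ∀ t ∈ Icc a b, X t * Y t = 1) : (P b).PosSemidef := by
  have hb : b ∈ Icc a b := right_mem_Icc.2 hab
  have hVs : ∀ t ∈ Icc a b, (V t)ᵀ = V t := fun t htm => by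
    simpa [conjTranspose_eq_transpose_of_trivial] using (hV t htm).1.eq
  have hM := ((hY.mul hP hab).mul hY.transpose hab).congr hab (fun _ _ => rfl)
    (Y' := fun t => Y t * (P t * V t * P t + W t) * (Y t)ᵀ) fun t htm => by
      simp only [Matrix.transpose_sub, Matrix.transpose_mul, Matrix.transpose_neg, hVs t htm,
        hPs t htm]
      noncomm_ring
  have h1 : (Y b * P b * (Y b)ᵀ).PosSemidef := by
    refine hM.posSemidef hab ?_ fun t htm => ?_
    · have := hP0.mul_mul_conjTranspose_same (Y a)
      rwa [conjTranspose_eq_transpose_of_trivial] at this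
    · have h2 := (hV t htm).mul_mul_conjTranspose_same (P t)
      rw [conjTranspose_eq_transpose_of_trivial, hPs t htm] at h2
      have := (h2.add (hW t htm)).mul_mul_conjTranspose_same (Y t)
      rwa [conjTranspose_eq_transpose_of_trivial] at this
  have h3 := h1.mul_mul_conjTranspose_same (X b)
  rw [conjTranspose_eq_transpose_of_trivial] at h3
  convert h3 using 1
  calc P b = (X b * Y b) * P b * (X b * Y b)ᵀ := by rw [hXY b hb]; simp
    _ = _ := by rw [Matrix.transpose_mul]; simp only [Matrix.mul_assoc]

end Riccati

/-- The terminal condition `v = h² u`, rewritten in terms of `e = u + P v`. -/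
lemma terminal_solve {ι : Type*} [Fintype ι] [DecidableEq ι] {P h : Matrix ι ι ℝ} {u v : ι → ℝ}
    (hP : P.PosSemidef) (hh : h.PosSemidef) (hv : v = (h * h) *ᵥ u) :
    v = (h * (1 + h * P * h)⁻¹ * h) *ᵥ (u + P *ᵥ v) := by
  have hhs : hᴴ = h := hh.1.eq
  have hpd : (1 + h * P * h).PosDef := by
    have := hP.conjTranspose_mul_mul_same h
    rw [hhs] at this
    exact PosDef.one.add_posSemidef this
  have hinv : (1 + h * P * h)⁻¹ * (1 + h * P * h) = 1 :=
    Matrix.nonsing_inv_mul _ ((isUnit_iff_isUnit_det _).1 hpd.isUnit)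
  have h1 : h *ᵥ (u + P *ᵥ v) = (1 + h * P * h) *ᵥ (h *ᵥ u) := by
    rw [hv, Matrix.mulVec_add, Matrix.mulVec_mulVec, Matrix.mulVec_mulVec, Matrix.mulVec_mulVec,
      ← Matrix.add_mulVec]
    congr 1
    noncomm_ring
  rw [← Matrix.mulVec_mulVec, h1, Matrix.mulVec_mulVec, Matrix.mul_assoc, hinv, Matrix.mul_one,
    Matrix.mulVec_mulVec]
  exact hv

/-! ### Integration by parts against the kernel -/

section Kernel

variable {a b : ℝ} {ι : Type*} [Fintype ι]

/-- If `w' = g`, `w(a) = 0`, `p' = -N w` and `p(b) = K w(b)`, then `p` is the integral of `g`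
against the kernel `K + ∫_{max(s,t)}^b N`. This is integration by parts: with `L(t) = ∫_t^b N`,
the function `p - L w` has derivative `-L g`. -/
lemma kernel_repr (hab : a ≤ b) {N : ℝ → Matrix ι ι ℝ} {K : Matrix ι ι ℝ} {g w p : ℝ → ι → ℝ}
    (hN : MatII N a b) (hw : VPrim a b w g) (hw0 : w a = 0)
    (hp : VPrim a b p fun t => -(N t *ᵥ w t)) (hpb : p b = K *ᵥ w b) {s : ℝ}
    (hs : s ∈ Icc a b) (i : ι) :
    IntervalIntegrable (fun t => ((K + matInt N (max s t) b) *ᵥ g t) i) volume a b ∧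
      p s i = ∫ t in a..b, ((K + matInt N (max s t) b) *ᵥ g t) i := by
  have ha : a ∈ Icc a b := left_mem_Icc.2 hab
  have hb : b ∈ Icc a b := right_mem_Icc.2 hab
  set L : ℝ → Matrix ι ι ℝ := fun t => matInt N t b with hL
  have hLb : L b = 0 := by ext; simp [hL, matInt]
  have hLp : MPrim a b L fun t => -(N t) := by
    refine MPrim.of_base (C := 0) hab (fun i j => (hN i j).neg) hb fun t _ => ?_
    ext i j
    simp [hL, matInt, intervalIntegral.integral_neg, intervalIntegral.integral_symm b t]
  have hconst : ∀ C : Matrix ι ι ℝ, VPrim a b (fun t => C *ᵥ w t) fun t => C *ᵥ g t := fun C =>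
    ((MPrim.const C).mulVec hw hab).congr hab (fun _ _ => rfl) fun t _ => by simp
  set q : ℝ → ι → ℝ := fun t => p t - L t *ᵥ w t with hq
  have hqp : VPrim a b q fun t => -(L t *ᵥ g t) :=
    (hp.sub (hLp.mulVec hw hab) hab).congr hab (fun _ _ => rfl) fun t _ => by
      rw [Matrix.neg_mulVec]; abel
  have hqb : q b = K *ᵥ w b := by simp [hq, hLb, hpb]
  have hK2 : VPrim a b (fun t => K *ᵥ w t - q t) fun t => (K + L t) *ᵥ g t :=
    ((hconst K).sub hqp hab).congr hab (fun _ _ => rfl) fun t _ => by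
      rw [Matrix.add_mulVec, sub_neg_eq_add]
  have hint : IntervalIntegrable (fun t => ((K + L (max s t)) *ᵥ g t) i) volume a b := by
    refine ii_cont_mulVec hab (fun k l => ?_) (fun k => (hw k).1) i
    refine continuousOn_const.add ((hLp.continuousOn hab k l).comp (by fun_prop) ?_)
    exact fun t htm => ⟨hs.1.trans (le_max_left _ _), max_le hs.2 htm.2⟩
  refine ⟨hint, ?_⟩
  have hias := ii_mono hint hab ha hs
  have hisb := ii_mono hint hab hs hb
  have e1 : ∫ t in a..s, ((K + L (max s t)) *ᵥ g t) i = ((K + L s) *ᵥ w s) i := by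
    have h1 := Prim.sub_eq (hconst (K + L s) i) hab ha hs
    simp only at h1
    rw [hw0, Matrix.mulVec_zero, Pi.zero_apply, sub_zero] at h1
    rw [← h1]
    refine intervalIntegral.integral_congr fun t htm => ?_
    rw [uIcc_of_le hs.1] at htm
    simp only [max_eq_left htm.2]
  have e2 : ∫ t in s..b, ((K + L (max s t)) *ᵥ g t) i =
      (K *ᵥ w b - q b) i - (K *ᵥ w s - q s) i := by
    rw [← Prim.sub_eq (hK2 i) hab hs hb]
    refine intervalIntegral.integral_congr fun t htm => ?_
    rw [uIcc_of_le hs.2] at htm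
    simp only [max_eq_right htm.1]
  change p s i = ∫ t in a..b, ((K + L (max s t)) *ᵥ g t) i
  rw [← intervalIntegral.integral_add_adjacent_intervals hias hisb, e1, e2, hqb, sub_self,
    Matrix.add_mulVec]
  simp only [hq, Pi.add_apply, Pi.sub_apply, Pi.zero_apply]
  ring

end Kernel

/-! ### The representation formula -/

/-- With `lν ≡ 0`, the solution `ν̂` of the two-point boundary value problem is given by
integrating the perturbation against the information kernel `Λ`. -/
theorem stmt7 {n m d : ℕ} (t0 T r : ℝ) (ht : t0 < T) (hr : 0 < r)
    (F : ℝ → Matrix (Fin n) (Fin n) ℝ) (G : ℝ → Matrix (Fin n) (Fin d) ℝ)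
    (Q : ℝ → Matrix (Fin d) (Fin d) ℝ) (H : ℝ → Matrix (Fin m) (Fin n) ℝ)
    (R : ℝ → Matrix (Fin m) (Fin m) ℝ)
    (hF : MatII F t0 T) (hG : MatL2 G t0 T) (hQ : MatII Q t0 T)
    (hQpsd : ∀ t ∈ Icc t0 T, (Q t).PosSemidef) (hH : MatL2 H t0 T) (hR : MatL2 R t0 T)
    (hRbd : ∀ t ∈ Icc t0 T, (R t - r • (1 : Matrix (Fin m) (Fin m) ℝ)).PosSemidef)
    (P0 ST : Matrix (Fin n) (Fin n) ℝ) (hP0 : P0.PosSemidef) (hST : ST.PosSemidef)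
    (STh : Matrix (Fin n) (Fin n) ℝ) (hSTh : STh.PosSemidef ∧ STh * STh = ST)
    (Pm : ℝ → Matrix (Fin n) (Fin n) ℝ) (hPm : SolvesFwdRiccati t0 T F G Q H R P0 Pm)
    (PhiFP : ℝ → ℝ → Matrix (Fin n) (Fin n) ℝ)
    (hPhiFP : IsTransition t0 T (fun τ => F τ - Pm τ * hrh H R τ) PhiFP)
    (lμ : ℝ → Fin n → ℝ) (hlμ : VecL2 lμ t0 T)
    (μ ν : ℝ → Fin n → ℝ)
    (hμν : SolvesTPBVP t0 T F G Q H R P0 ST lμ (fun _ => 0) μ ν) :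
    ∀ s ∈ Icc t0 T,
      IntervalIntegrable (fun t => (Lker T H R PhiFP Pm STh s t).mulVec (lμ t)) volume t0 T ∧
      ν s = ∫ t in t0..T, (Lker T H R PhiFP Pm STh s t).mulVec (lμ t) := by
  have hab : t0 ≤ T := ht.le
  have ha : t0 ∈ Icc t0 T := left_mem_Icc.2 hab
  have hb : T ∈ Icc t0 T := right_mem_Icc.2 hab
  have hRpsd : ∀ t ∈ Icc t0 T, (R t).PosSemidef := fun t htm => by
    have := (hRbd t htm).add (PosSemidef.one.smul hr.le)
    rwa [sub_add_cancel] at this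
  have hVpsd : ∀ t ∈ Icc t0 T, (hrh H R t).PosSemidef := fun t htm => hrh_posSemidef (hRpsd t htm)
  have hWpsd : ∀ t ∈ Icc t0 T, (gqg G Q t).PosSemidef := fun t htm => gqg_posSemidef (hQpsd t htm)
  have hVii : MatII (hrh H R) t0 T := hrh_matII hab hr hH hR hRbd
  set V := hrh H R with hVdef
  set W := gqg G Q with hWdef
  have hVs : ∀ t ∈ Icc t0 T, (V t)ᵀ = V t := fun t htm => by
    simpa [conjTranspose_eq_transpose_of_trivial] using (hVpsd t htm).1.eq
  have hWs : ∀ t ∈ Icc t0 T, (W t)ᵀ = W t := fun t htm => by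
    simpa [conjTranspose_eq_transpose_of_trivial] using (hWpsd t htm).1.eq
  obtain ⟨hPc, hPii, hPa, hPeq⟩ := hPm
  have hPp : MPrim t0 T Pm fun t => F t * Pm t + Pm t * (F t)ᵀ - Pm t * V t * Pm t + W t :=
    MPrim.of_base hab hPii ha hPeq
  have hAii : MatII (fun t => F t - Pm t * V t) t0 T := fun i j =>
    (hF i j).sub (MatII.cont_mul hab hPc hVii i j)
  set X : ℝ → Matrix (Fin n) (Fin n) ℝ := fun t => PhiFP t t0 with hX
  set Y : ℝ → Matrix (Fin n) (Fin n) ℝ := fun t => PhiFP t0 t with hY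
  have hXp : MPrim t0 T X fun t => (F t - Pm t * V t) * X t := hPhiFP.mprim hab ha
  have hYp : MPrim t0 T Y fun t => -(Y t * (F t - Pm t * V t)) := hPhiFP.mprim_snd hab hAii
  have hXY : ∀ t ∈ Icc t0 T, X t * Y t = 1 := fun t htm => hPhiFP.mul_inv hab hAii htm
  have hcomp : ∀ s ∈ Icc t0 T, ∀ t ∈ Icc t0 T, PhiFP s t = X s * Y t :=
    fun s hs t htm => hPhiFP.comp hab hAii hs htm
  have hPs : ∀ t ∈ Icc t0 T, (Pm t)ᵀ = Pm t := by
    refine riccati_symm hab hVs hWs hPp ?_ hYp hXY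
    rw [hPa]
    simpa [conjTranspose_eq_transpose_of_trivial] using hP0.1.eq
  have hPT : (Pm T).PosSemidef :=
    riccati_posSemidef hab hVpsd hWpsd hPp hPs (hPa ▸ hP0) hYp hXY
  obtain ⟨-, -, hμii, hνii, hμeq, hνeq, hμa, hνb⟩ := hμν
  have hμp : VPrim t0 T μ fun t => F t *ᵥ μ t - W t *ᵥ ν t + lμ t :=
    VPrim.of_base hab hμii ha hμeq
  have hνp : VPrim t0 T ν fun t => -((F t)ᵀ *ᵥ ν t + V t *ᵥ μ t) := by
    refine (VPrim.of_base (c := ν T) hab hνii.neg hb fun t htm => ?_).congr hab (fun _ _ => rfl)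
      (X' := fun t => -((F t)ᵀ *ᵥ ν t + V t *ᵥ μ t - 0)) fun t _ => by rw [sub_zero]
    rw [hνeq t htm, intervalIntegral.integral_symm T t, ← intervalIntegral.integral_neg]
    rfl
  -- By the Riccati equation for `Π`, the combination `e = μ + Π ν` decouples from `ν`.
  set e : ℝ → Fin n → ℝ := fun t => μ t + Pm t *ᵥ ν t with he
  have hep : VPrim t0 T e fun t => (F t - Pm t * V t) *ᵥ e t + lμ t := by
    refine (hμp.add (hPp.mulVec hνp hab) hab).congr hab (fun _ _ => rfl) fun t _ => ?_
    simp only [he, Matrix.mulVec_add, Matrix.mulVec_neg, Matrix.add_mulVec, Matrix.sub_mulVec,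
      Matrix.sub_mul, Matrix.mulVec_mulVec, Matrix.mul_assoc]
    abel
  have he0 : e t0 = 0 := by simp [he, hμa, hPa]
  -- Passing to the coordinates of the flow `X` removes the drift terms of `e` and of `ν`.
  set w : ℝ → Fin n → ℝ := fun t => Y t *ᵥ e t with hw
  have hwp : VPrim t0 T w fun t => Y t *ᵥ lμ t := by
    refine (hYp.mulVec hep hab).congr hab (fun _ _ => rfl) fun t _ => ?_
    simp only [Matrix.mulVec_add, Matrix.neg_mulVec, Matrix.mulVec_mulVec]
    abel
  have hw0 : w t0 = 0 := by simp [hw, he0]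
  have heX : ∀ t ∈ Icc t0 T, e t = X t *ᵥ w t := fun t htm => by
    simp only [hw, Matrix.mulVec_mulVec, hXY t htm, Matrix.one_mulVec]
  set N : ℝ → Matrix (Fin n) (Fin n) ℝ := fun t => (X t)ᵀ * V t * X t with hN
  have hNii : MatII N t0 T :=
    MatII.mul_cont hab (MatII.cont_mul hab (hXp.transpose.continuousOn hab) hVii)
      (hXp.continuousOn hab)
  set p : ℝ → Fin n → ℝ := fun t => (X t)ᵀ *ᵥ ν t with hp
  have hpp : VPrim t0 T p fun t => -(N t *ᵥ w t) := by
    refine (hXp.transpose.mulVec hνp hab).congr hab (fun _ _ => rfl) fun t htm => ?_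
    have h1 : N t *ᵥ w t = ((X t)ᵀ * V t) *ᵥ e t :=
      (Matrix.mulVec_mulVec _ _ _).symm.trans (by rw [← heX t htm])
    rw [h1]
    simp only [he, Matrix.transpose_mul, Matrix.transpose_sub, hVs t htm, hPs t htm,
      Matrix.mulVec_add, Matrix.mulVec_neg, Matrix.mul_sub, Matrix.sub_mulVec,
      Matrix.mulVec_mulVec, Matrix.mul_assoc]
    abel
  -- The terminal condition, solved for `ν T` in terms of `e T`.
  set C : Matrix (Fin n) (Fin n) ℝ := STh * (1 + STh * Pm T * STh)⁻¹ * STh with hC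
  have hνT : ν T = C *ᵥ e T := by
    refine terminal_solve hPT hSTh.1 ?_
    rw [hSTh.2]
    exact hνb
  have hpT : p T = ((X T)ᵀ * C * X T) *ᵥ w T := by
    rw [hp]
    simp only
    rw [hνT, heX T hb, Matrix.mulVec_mulVec, Matrix.mulVec_mulVec, Matrix.mul_assoc]
  intro s hs
  -- The kernel `Λ(s,t|T)` factors through the flow, by `Φ(τ,t) = X τ Y t`.
  have hLk : ∀ t ∈ Icc t0 T, (Lker T H R PhiFP Pm STh s t) *ᵥ lμ t =
      (Y s)ᵀ *ᵥ (((X T)ᵀ * C * X T + matInt N (max s t) T) *ᵥ (Y t *ᵥ lμ t)) := by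
    intro t htm
    have hm : max s t ∈ Icc t0 T := ⟨hs.1.trans (le_max_left _ _), max_le hs.2 htm.2⟩
    have h1 : matInt (fun τ => (PhiFP τ s)ᵀ * V τ * PhiFP τ t) (max s t) T =
        (Y s)ᵀ * matInt N (max s t) T * Y t := by
      rw [← matInt_const_mul_mul fun i j => ii_mono (hNii i j) hab hm hb]
      refine matInt_congr hm.2 fun τ hτ => ?_
      have hτ' : τ ∈ Icc t0 T := ⟨hm.1.trans hτ.1, hτ.2⟩
      rw [hcomp τ hτ' s hs, hcomp τ hτ' t htm, Matrix.transpose_mul]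
      simp only [hN, Matrix.mul_assoc]
    rw [Lker, ← hVdef, h1, hcomp T hb s hs, hcomp T hb t htm, Matrix.transpose_mul,
      Matrix.mulVec_mulVec, Matrix.mulVec_mulVec]
    congr 1
    simp only [hC, Matrix.mul_add, Matrix.add_mul, Matrix.mul_assoc]
  have hrep := kernel_repr hab hNii hwp hw0 hpp hpT hs
  have hψii := ii_pi fun i => (hrep i).1
  have hps : p s = ∫ t in t0..T, ((X T)ᵀ * C * X T + matInt N (max s t) T) *ᵥ (Y t *ᵥ lμ t) := by
    funext i
    rw [integral_apply hψii, (hrep i).2]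
  set B : (Fin n → ℝ) →L[ℝ] (Fin n → ℝ) := ((Y s)ᵀ).mulVecLin.toContinuousLinearMap with hB
  constructor
  · refine IntervalIntegrable.congr ?_
      (⟨B.integrable_comp hψii.1, B.integrable_comp hψii.2⟩ : IntervalIntegrable
      (fun t => B (((X T)ᵀ * C * X T + matInt N (max s t) T) *ᵥ (Y t *ᵥ lμ t))) volume t0 T)
    intro t htm
    rw [uIoc_of_le hab] at htm
    exact (hLk t (Ioc_subset_Icc_self htm)).symm
  · rw [intervalIntegral.integral_congr (g := fun t =>
      B (((X T)ᵀ * C * X T + matInt N (max s t) T) *ᵥ (Y t *ᵥ lμ t))) fun t htm => ?_,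
      B.intervalIntegral_comp_comm hψii, ← hps]
    · change ν s = (Y s)ᵀ *ᵥ ((X s)ᵀ *ᵥ ν s)
      rw [Matrix.mulVec_mulVec, ← Matrix.transpose_mul, hXY s hs, Matrix.transpose_one,
        Matrix.one_mulVec]
    · rw [uIcc_of_le hab] at htm
      exact hLk t htm

end SDEKernels
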